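/- arXiv:1606.09389 — 2 statements merged into one kernel-verified Lean document; each statement's English description precedes it below -/
import Mathlib

section
/- Every finite bipartite graph G in which the degree of every vertex lies in the set {1, 2, 4, 6, 7, 8} has a cyclic interval t-coloring for some positive integer t. -/
open SimpleGraph

/-- The set of colors appearing on edges incident to `v` under the edge coloring `c`. -/
def colorsAt {V : Type*} (G : SimpleGraph V) (c : Sym2 V → ℕ) (v : V) : Set ℕ :=
  c '' (G.incidenceSet v)

/-- A set of natural numbers is an interval of consecutive integers. -/
def IsIntervalSet (S : Set ℕ) : Prop := ∃ a b : ℕ, S = Set.Icc a b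

/-- A proper edge coloring of `G` with colors `1, …, t`: every edge gets a color in
`{1, …, t}` and distinct edges sharing a vertex get distinct colors. -/
def IsProperEdgeColoring {V : Type*} (G : SimpleGraph V) (t : ℕ) (c : Sym2 V → ℕ) : Prop :=
  (∀ e ∈ G.edgeSet, c e ∈ Set.Icc 1 t) ∧
  ∀ e₁ ∈ G.edgeSet, ∀ e₂ ∈ G.edgeSet, e₁ ≠ e₂ → (∃ v, v ∈ e₁ ∧ v ∈ e₂) → c e₁ ≠ c e₂

/-- A cyclic interval `t`-coloring of `G`: a proper edge coloring with colors `1, …, t`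
such that at every vertex the set of incident colors, or its complement in `{1, …, t}`,
is an interval of consecutive integers. -/
def IsCyclicIntervalColoring {V : Type*} (G : SimpleGraph V) (t : ℕ) (c : Sym2 V → ℕ) : Prop :=
  IsProperEdgeColoring G t c ∧
  ∀ v : V, IsIntervalSet (colorsAt G c v) ∨ IsIntervalSet (Set.Icc 1 t \ colorsAt G c v)

/-! Split the edges so that every vertex sees equally many edges of either half, and direct the two
halves oppositely: this gives a balanced digraph with outdegrees at most 4. Two further even splits
label its edges by `1, 2, 3, 4` so that the out-edges and the in-edges at a vertex carry the same
labels, which are distinct and consecutive on a 4-cycle. Replacing the label `p` by the color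
`2 * p - 1` on one half of the original edges and by `2 * p` on the other makes the colors at every
vertex consecutive on an 8-cycle.

Odd degrees are made even by loops, which join the two copies of a vertex in the graph of edges
taken in both directions. Deleting a loop deletes one color; this is harmless at degrees 1 and 7,
which leave a single color or a single missing color. -/

section FiberCard

variable {E L X : Type*}

/-- All fibers of `f` are finite. A multigraph with edge type `E` is encoded by the maps sending an
edge to its ends, and this says that it is locally finite. -/
def FiniteFibers (f : E → X) : Prop :=
  ∀ x, (f ⁻¹' {x}).Finite

/-- The number of elements of the fiber of `f` over `x`, that is, the degree of `x` when `f` sends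
an edge to one of its ends (`0` if the fiber is infinite). -/
noncomputable def fiberCard (f : E → X) (x : X) : ℕ :=
  (f ⁻¹' {x}).ncard

theorem FiniteFibers.prodMk {f : E → X} (hf : FiniteFibers f) {B : Type*} (c : E → B) :
    FiniteFibers fun e ↦ (f e, c e) :=
  fun z ↦ (hf z.1).subset fun _ he ↦ congrArg Prod.fst he

theorem preimage_sumElim_singleton (f : E → X) (l : L → X) (x : X) :
    Sum.elim f l ⁻¹' {x} = Sum.inl '' (f ⁻¹' {x}) ∪ Sum.inr '' (l ⁻¹' {x}) := by
  ext (e | e) <;> simp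

theorem FiniteFibers.sumElim {f : E → X} {l : L → X} (hf : FiniteFibers f) (hl : FiniteFibers l) :
    FiniteFibers (Sum.elim f l) := fun x ↦ by
  rw [preimage_sumElim_singleton]
  exact ((hf x).image _).union ((hl x).image _)

theorem fiberCard_sumElim {f : E → X} {l : L → X} (hf : FiniteFibers f) (hl : FiniteFibers l)
    (x : X) : fiberCard (Sum.elim f l) x = fiberCard f x + fiberCard l x := by
  rw [fiberCard, preimage_sumElim_singleton,
    Set.ncard_union_eq Set.disjoint_image_inl_image_inr ((hf x).image _) ((hl x).image _),
    Set.ncard_image_of_injective _ Sum.inl_injective,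
    Set.ncard_image_of_injective _ Sum.inr_injective, fiberCard, fiberCard]

theorem finiteFibers_of_injective {f : E → X} (hf : Function.Injective f) : FiniteFibers f :=
  fun _ ↦ (Set.subsingleton_singleton.preimage hf).finite

theorem preimage_subtypeVal_singleton_eq_empty {P : X → Prop} {x : X} (hx : ¬P x) :
    (Subtype.val : {x // P x} → X) ⁻¹' {x} = ∅ :=
  Set.eq_empty_of_forall_notMem fun y hy ↦ hx (hy ▸ y.2)

theorem fiberCard_subtypeVal_odd (d : X → ℕ) (x : X) :
    fiberCard (Subtype.val : {x // Odd (d x)} → X) x = d x % 2 := by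
  rcases Nat.even_or_odd (d x) with h | h
  · rw [fiberCard, preimage_subtypeVal_singleton_eq_empty (P := fun x ↦ Odd (d x)) (x := x)
        (Nat.not_odd_iff_even.2 h), Set.ncard_empty, Nat.even_iff.1 h]
  · have : (Subtype.val : {x // Odd (d x)} → X) ⁻¹' {x} = {⟨x, h⟩} := by
      ext y
      simp [Subtype.ext_iff]
    rw [fiberCard, this, Set.ncard_singleton, Nat.odd_iff.1 h]

theorem preimage_prodMk_not (f : E → X) (c : E → Bool) (x : X) (b : Bool) :
    (fun e ↦ (f e, !c e)) ⁻¹' {(x, b)} = (fun e ↦ (f e, c e)) ⁻¹' {(x, !b)} := by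
  ext e
  simp [Bool.not_eq_eq_eq_not]

theorem preimage_prodMk_union (f : E → X) (c : E → Bool) (x : X) :
    (fun e ↦ (f e, c e)) ⁻¹' {(x, true)} ∪ (fun e ↦ (f e, c e)) ⁻¹' {(x, false)} =
      f ⁻¹' {x} := by
  ext e
  cases h : c e <;> simp [h]

theorem fiberCard_prodMk_add {f : E → X} (hf : FiniteFibers f) (c : E → Bool) (x : X) :
    fiberCard (fun e ↦ (f e, c e)) (x, true) + fiberCard (fun e ↦ (f e, c e)) (x, false) =
      fiberCard f x := by
  have hdisj : Disjoint ((fun e ↦ (f e, c e)) ⁻¹' {(x, true)})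
      ((fun e ↦ (f e, c e)) ⁻¹' {(x, false)}) :=
    Disjoint.preimage _ (by simp)
  rw [fiberCard, fiberCard, fiberCard, ← preimage_prodMk_union f c x,
    Set.ncard_union_eq hdisj (hf.prodMk c _) (hf.prodMk c _)]

theorem fiberCard_comp_perm (f : E → X) (σ : Equiv.Perm E) (x : X) :
    fiberCard (f ∘ σ) x = fiberCard f x := by
  rw [fiberCard, Set.preimage_comp, ← Equiv.image_symm_eq_preimage,
    Set.ncard_image_of_injective _ σ.symm.injective, fiberCard]

end FiberCard

section Alternating

variable {E X Y : Type*}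

theorem exists_involutive_forall_ne_of_even_card {α : Type*} [Finite α] (h : Even (Nat.card α)) :
    ∃ s : α → α, Function.Involutive s ∧ ∀ a, s a ≠ a := by
  obtain ⟨k, hk⟩ := h
  obtain ⟨φ⟩ : Nonempty (α ≃ Fin k × Bool) := Finite.card_eq.1 (by simp [hk, mul_two])
  let flip : Fin k × Bool → Fin k × Bool := Prod.map id not
  refine ⟨φ.symm ∘ flip ∘ φ, fun a ↦ ?_, fun a ha ↦ ?_⟩
  · simp [flip, Prod.map_map, Bool.involutive_not.comp_self]
  · have hfix : flip (φ a) = φ a := φ.symm_apply_eq.1 ha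
    exact Bool.not_ne_self _ (congrArg Prod.snd hfix)

theorem exists_involutive_fiberwise {f : E → X} (hf : FiniteFibers f)
    (heven : ∀ x, Even (fiberCard f x)) :
    ∃ σ : Equiv.Perm E, Function.Involutive σ ∧ (∀ e, σ e ≠ e) ∧ ∀ e, f (σ e) = f e := by
  have hpair : ∀ x, ∃ s : {e // f e = x} → {e // f e = x}, Function.Involutive s ∧ ∀ e, s e ≠ e :=
    fun x ↦ by
      have : Finite {e // f e = x} := hf x
      exact exists_involutive_forall_ne_of_even_card (heven x)
  choose s hs hs_ne using hpair
  let φ := Equiv.sigmaFiberEquiv f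
  have hmap : Function.Involutive (Sigma.map id s) := fun ⟨x, e⟩ ↦ congrArg (Sigma.mk x) (hs x e)
  have hinv : Function.Involutive (φ ∘ Sigma.map id s ∘ φ.symm) := fun e ↦ by
    simp only [Function.comp_apply, Equiv.symm_apply_apply, hmap _, Equiv.apply_symm_apply]
  refine ⟨hinv.toPerm, hinv, fun e he ↦ ?_, fun e ↦ (s (f e) ⟨e, rfl⟩).2⟩
  exact hs_ne (f e) ⟨e, rfl⟩ (Subtype.ext he)

theorem semiconjBy_zpow_mul_of_involutive {σ τ : Equiv.Perm E} (hσ : Function.Involutive σ)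
    (hτ : Function.Involutive τ) (k : ℤ) : SemiconjBy σ ((τ * σ) ^ k) ((τ * σ) ^ (-k)) := by
  have h : SemiconjBy σ (τ * σ) (τ * σ)⁻¹ := by
    rw [SemiconjBy, eq_inv_mul_iff_mul_eq]
    ext e
    simp [hσ _, hτ _]
  simpa only [inv_zpow'] using h.zpow_right k

theorem not_sameCycle_mul_of_involutive {σ τ : Equiv.Perm E} (hσ : Function.Involutive σ)
    (hτ : Function.Involutive τ) (hσ_ne : ∀ e, σ e ≠ e) (hτ_ne : ∀ e, τ e ≠ e) (e : E) :
    ¬ (τ * σ).SameCycle e (σ e) := by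
  rintro ⟨k, hk⟩
  have hreflect (m : ℤ) : σ (((τ * σ) ^ m) e) = ((τ * σ) ^ (k - m)) e := by
    rw [← Equiv.Perm.mul_apply, (semiconjBy_zpow_mul_of_involutive hσ hτ m).eq,
      Equiv.Perm.mul_apply, ← hk, ← Equiv.Perm.mul_apply, ← zpow_add, neg_add_eq_sub]
  obtain ⟨m, rfl | rfl⟩ := Int.even_or_odd' k
  · exact hσ_ne _ ((hreflect m).trans (by rw [two_mul, add_sub_cancel_right]))
  · have hstep : ((τ * σ) ^ (m + 1)) e = τ (σ (((τ * σ) ^ m) e)) := by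
      rw [add_comm, zpow_add, zpow_one]; rfl
    refine hτ_ne (σ (((τ * σ) ^ m) e)) ?_
    rw [← hstep, hreflect m]
    congr 2
    ring

theorem exists_bool_alternating {σ τ : Equiv.Perm E} (hσ : Function.Involutive σ)
    (hτ : Function.Involutive τ) (hσ_ne : ∀ e, σ e ≠ e) (hτ_ne : ∀ e, τ e ≠ e) :
    ∃ c : E → Bool, (∀ e, c (σ e) = !c e) ∧ ∀ e, c (τ e) = !c e := by
  classical
  let q : E → Quotient (Equiv.Perm.SameCycle.setoid (τ * σ)) := Quotient.mk _
  let _ : LinearOrder (Quotient (Equiv.Perm.SameCycle.setoid (τ * σ))) :=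
    linearOrderOfSTO WellOrderingRel
  have hqσ (e : E) : q e ≠ q (σ e) := fun h ↦
    not_sameCycle_mul_of_involutive hσ hτ hσ_ne hτ_ne e (Quotient.exact h)
  have hqτσ (e : E) : q (τ (σ e)) = q e :=
    Quotient.sound (Equiv.Perm.sameCycle_apply_left.2 (Equiv.Perm.SameCycle.refl (τ * σ) e))
  have hqτ (e : E) : q (τ e) = q (σ e) := by
    rw [← hqτσ (σ e), hσ e]
  have hqστ (e : E) : q (σ (τ e)) = q e := by
    rw [← hqτσ (σ (τ e)), hσ, hτ]
  have hflip (e : E) : decide (q (σ e) < q e) = !decide (q e < q (σ e)) := by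
    rw [← decide_not, decide_eq_decide, not_lt]
    exact (hqσ e).symm.le_iff_lt.symm
  refine ⟨fun e ↦ decide (q e < q (σ e)), fun e ↦ ?_, fun e ↦ ?_⟩
  · simp only [hσ e, hflip]
  · simp only [hqτ, hqστ, hflip]

theorem fiberCard_prodMk_eq_of_perm {f : E → X} {c : E → Bool} (σ : Equiv.Perm E)
    (hf : ∀ e, f (σ e) = f e) (hc : ∀ e, c (σ e) = !c e) (x : X) :
    fiberCard (fun e ↦ (f e, c e)) (x, true) = fiberCard (fun e ↦ (f e, c e)) (x, false) := by
  rw [← fiberCard_comp_perm _ σ]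
  simp only [fiberCard, Function.comp_def, hf, hc, preimage_prodMk_not, Bool.not_true]

theorem exists_bool_equitable_of_even {f : E → X} {g : E → Y} (hf : FiniteFibers f)
    (hg : FiniteFibers g) (hf_even : ∀ x, Even (fiberCard f x))
    (hg_even : ∀ y, Even (fiberCard g y)) :
    ∃ c : E → Bool,
      (∀ x, fiberCard (fun e ↦ (f e, c e)) (x, true) =
        fiberCard (fun e ↦ (f e, c e)) (x, false)) ∧
      ∀ y, fiberCard (fun e ↦ (g e, c e)) (y, true) =
        fiberCard (fun e ↦ (g e, c e)) (y, false) := by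
  obtain ⟨σ, hσ, hσ_ne, hfσ⟩ := exists_involutive_fiberwise hf hf_even
  obtain ⟨τ, hτ, hτ_ne, hgτ⟩ := exists_involutive_fiberwise hg hg_even
  obtain ⟨c, hcσ, hcτ⟩ := exists_bool_alternating hσ hτ hσ_ne hτ_ne
  exact ⟨c, fiberCard_prodMk_eq_of_perm σ hfσ hcσ, fiberCard_prodMk_eq_of_perm τ hgτ hcτ⟩

end Alternating

section BalancedDigraph

variable {E V : Type*}

-- Loops at the odd vertices make all degrees even; a loop counts once as an out- and once as an
-- in-edge, so deleting it preserves the equality of the out- and in-degrees of each color.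
theorem exists_bool_equitable_of_balanced {f g : E → V} (hf : FiniteFibers f)
    (hg : FiniteFibers g) (hfg : ∀ v, fiberCard f v = fiberCard g v) :
    ∃ c : E → Bool, ∀ v b,
      fiberCard (fun e ↦ (f e, c e)) (v, b) = fiberCard (fun e ↦ (g e, c e)) (v, b) ∧
      fiberCard (fun e ↦ (f e, c e)) (v, b) ≤ fiberCard (fun e ↦ (f e, c e)) (v, !b) + 1 := by
  let loop : {v // Odd (fiberCard f v)} → V := Subtype.val
  have hloop : FiniteFibers loop := finiteFibers_of_injective Subtype.val_injective
  have hloop_card (v : V) : fiberCard loop v = fiberCard f v % 2 := fiberCard_subtypeVal_odd _ v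
  have heven {h : E → V} (hh : FiniteFibers h) (hfh : ∀ v, fiberCard f v = fiberCard h v) (v : V) :
      Even (fiberCard (Sum.elim h loop) v) := by
    rw [fiberCard_sumElim hh hloop, hloop_card, ← hfh, Nat.even_iff]
    omega
  obtain ⟨c, hcf, hcg⟩ := exists_bool_equitable_of_even (hf.sumElim hloop) (hg.sumElim hloop)
    (heven hf fun _ ↦ rfl) (heven hg hfg)
  have hsplit {h : E → V} (hh : FiniteFibers h) (z : V × Bool) :
      fiberCard (fun e ↦ (Sum.elim h loop e, c e)) z =
        fiberCard (fun e ↦ (h e, c (.inl e))) z + fiberCard (fun l ↦ (loop l, c (.inr l))) z := by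
    rw [← fiberCard_sumElim (hh.prodMk _) (hloop.prodMk _)]
    congr 1
    ext (e | l) <;> rfl
  refine ⟨fun e ↦ c (.inl e), fun v b ↦ ?_⟩
  have hcf_v := hcf v
  have hcg_v := hcg v
  rw [hsplit hf, hsplit hf] at hcf_v
  rw [hsplit hg, hsplit hg] at hcg_v
  have hf_v := fiberCard_prodMk_add hf (fun e ↦ c (.inl e)) v
  have hg_v := fiberCard_prodMk_add hg (fun e ↦ c (.inl e)) v
  have hloop_v := fiberCard_prodMk_add hloop (fun l ↦ c (.inr l)) v
  have hfg_v := hfg v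
  have hloop_card_v := hloop_card v
  cases b <;> simp only [Bool.not_true, Bool.not_false] <;> omega

end BalancedDigraph

section CyclicInterval

variable {D E X : Type*} {t : ℕ} {c : E → ℕ} {S T : Set E}

/-- `A` or its complement in `{1, …, t}` is an interval. -/
def IsCyclicIntervalSet (t : ℕ) (A : Set ℕ) : Prop :=
  IsIntervalSet A ∨ IsIntervalSet (Set.Icc 1 t \ A)

/-- The condition that a cyclic interval `t`-coloring `c` imposes on the set `S` of all edges at a
single vertex. -/
structure IsCyclicIntervalOn (t : ℕ) (c : E → ℕ) (S : Set E) : Prop where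
  mapsTo : Set.MapsTo c S (Set.Icc 1 t)
  injOn : Set.InjOn c S
  isCyclicIntervalSet : IsCyclicIntervalSet t (c '' S)

theorem isIntervalSet_of_ncard_eq_one {A : Set ℕ} (hA : A.ncard = 1) : IsIntervalSet A := by
  obtain ⟨a, rfl⟩ := Set.ncard_eq_one.1 hA
  exact ⟨a, a, Set.Icc_self a |>.symm⟩

theorem isCyclicIntervalOn_image {ι : D → E} (hι : Function.Injective ι) {S : Set D} :
    IsCyclicIntervalOn t c (ι '' S) ↔ IsCyclicIntervalOn t (c ∘ ι) S := by
  constructor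
  · rintro ⟨hmaps, hinj, hcyc⟩
    exact ⟨Set.mapsTo_image_iff.1 hmaps, hinj.comp hι.injOn (Set.mapsTo_image _ _),
      by rwa [Set.image_comp]⟩
  · rintro ⟨hmaps, hinj, hcyc⟩
    exact ⟨Set.mapsTo_image_iff.2 hmaps, hinj.image_of_comp, by rwa [← Set.image_comp]⟩

theorem IsCyclicIntervalOn.mono_of_ncard (hT : IsCyclicIntervalOn t c T) (hST : S ⊆ T)
    (hS : S.ncard = 1 ∨ S.ncard + 1 = t) : IsCyclicIntervalOn t c S := by
  have hmaps := hT.mapsTo.mono_left hST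
  have hinj := hT.injOn.mono hST
  refine ⟨hmaps, hinj, hS.imp (fun hS ↦ ?_) fun hS ↦ ?_⟩ <;>
    apply isIntervalSet_of_ncard_eq_one
  · rw [hinj.ncard_image, hS]
  · have hfin : (c '' S).Finite := (Set.finite_Icc 1 t).subset hmaps.image_subset
    rw [Set.ncard_sdiff hmaps.image_subset hfin, hinj.ncard_image,
      Set.ncard_eq_toFinset_card', Set.toFinset_Icc, Nat.card_Icc]
    omega

theorem IsIntervalSet.preimage_half {A : Set ℕ} (hA : IsIntervalSet A) (h0 : 0 ∉ A) :
    IsIntervalSet {q | (q + 1) / 2 ∈ A} := by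
  obtain ⟨l, r, rfl⟩ := hA
  refine ⟨2 * l - 1, 2 * r, ?_⟩
  ext q
  simp only [Set.mem_Icc, Set.mem_ofPred_eq] at h0 ⊢
  omega

theorem IsCyclicIntervalSet.preimage_half {A : Set ℕ} (hA : IsCyclicIntervalSet t A)
    (hAt : A ⊆ Set.Icc 1 t) : IsCyclicIntervalSet (2 * t) {q | (q + 1) / 2 ∈ A} := by
  refine hA.imp (fun h ↦ h.preimage_half fun h0 ↦ by simpa using hAt h0) fun h ↦ ?_
  convert h.preimage_half (by simp) using 1
  ext q
  simp only [Set.mem_sdiff, Set.mem_Icc, Set.mem_ofPred_eq]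
  exact and_congr_left fun _ ↦ by omega

theorem image_two_mul_sub {h : E → X} {b : E → Bool} {x : X} {A : Set ℕ}
    (himage : ∀ i, c '' ((fun e ↦ (h e, b e)) ⁻¹' {(x, i)}) = A) :
    (fun e ↦ 2 * c e - (b e).toNat) '' (h ⁻¹' {x}) = {q | (q + 1) / 2 ∈ A} := by
  ext q
  constructor
  · rintro ⟨e, he, rfl⟩
    have hce : c e ∈ A := himage (b e) ▸ ⟨e, by simpa using he, rfl⟩
    have hhalf : (2 * c e - (b e).toNat + 1) / 2 = c e := by
      have := (b e).toNat_le
      omega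
    simpa only [Set.mem_ofPred_eq, hhalf] using hce
  · intro hq
    obtain ⟨e, he, hce⟩ : (q + 1) / 2 ∈ c '' ((fun e ↦ (h e, b e)) ⁻¹' {(x, q.bodd)}) :=
      (himage _).symm ▸ hq
    simp only [Set.mem_preimage, Set.mem_singleton_iff, Prod.mk.injEq] at he
    refine ⟨e, he.1, ?_⟩
    have hmod := Nat.mod_two_of_bodd q
    simp only [hce, he.2]
    omega

theorem isCyclicIntervalOn_two_mul_sub {h : E → X} {b : E → Bool} {x : X}
    (hc : ∀ i, IsCyclicIntervalOn t c ((fun e ↦ (h e, b e)) ⁻¹' {(x, i)})) {A : Set ℕ}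
    (himage : ∀ i, c '' ((fun e ↦ (h e, b e)) ⁻¹' {(x, i)}) = A) :
    IsCyclicIntervalOn (2 * t) (fun e ↦ 2 * c e - (b e).toNat) (h ⁻¹' {x}) := by
  have hmaps {e : E} (he : h e = x) : 1 ≤ c e ∧ c e ≤ t := (hc (b e)).mapsTo (by simp [he])
  have hAt : A ⊆ Set.Icc 1 t := himage true ▸ (hc true).mapsTo.image_subset
  refine ⟨fun e he ↦ ?_, fun e he e' he' hee' ↦ ?_, ?_⟩
  · have := hmaps he
    have := (b e).toNat_le
    simp only [Set.mem_Icc]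
    omega
  · have hpos := (hmaps he).1
    have hble := (b e).toNat_le
    have hble' := (b e').toNat_le
    have hceq : c e = c e' := by grind
    have hbeq : b e = b e' := by grind [Bool.toNat]
    exact (hc (b e)).injOn (by simpa using he) (by simpa [hbeq] using he') hceq
  · rw [image_two_mul_sub himage]
    exact (himage true ▸ (hc true).isCyclicIntervalSet).preimage_half hAt

end CyclicInterval

section FourLabels

variable {E V : Type*}

/-- The label in `{1, 2, 3, 4}` of an edge that lies in part `i` of the first and in part `j` of the
second of two successive bipartitions. The first part is the parity of the label, so that labels
which are opposite on the 4-cycle lie in the same part. -/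
def fourLabel (i j : Bool) : ℕ :=
  2 * j.toNat + i.toNat + 1

theorem fourLabel_inj {i j i' j' : Bool} : fourLabel i j = fourLabel i' j' ↔ i = i' ∧ j = j' := by
  revert i j i' j'
  decide

theorem fourLabel_mem_Icc (i j : Bool) : fourLabel i j ∈ Set.Icc 1 4 := by
  revert i j
  decide

theorem isCyclicIntervalSet_of_fourLabel {A : Set ℕ} (hA : A ⊆ Set.Icc 1 4)
    (h : ∀ i, (∀ j, fourLabel i j ∈ A) → ∃ j, fourLabel (!i) j ∈ A) :
    IsCyclicIntervalSet 4 A := by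
  have hcases : ∀ B ∈ (Finset.Icc 1 4).powerset,
      (∀ i, (∀ j, fourLabel i j ∈ B) → ∃ j, fourLabel (!i) j ∈ B) →
      ∃ l ∈ Finset.range 5, ∃ r ∈ Finset.range 5,
        B = Finset.Icc l r ∨ Finset.Icc 1 4 \ B = Finset.Icc l r := by
    decide
  lift A to Finset ℕ using (Set.finite_Icc 1 4).subset hA
  rw [← Finset.coe_Icc, Finset.coe_subset] at hA
  obtain ⟨l, -, r, -, hlr⟩ := hcases A (Finset.mem_powerset.2 hA) h
  exact hlr.imp (fun h ↦ ⟨l, r, by rw [h, Finset.coe_Icc]⟩) fun h ↦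
    ⟨l, r, by rw [← Finset.coe_Icc, ← Finset.coe_sdiff, h, Finset.coe_Icc]⟩

variable {h : E → V} {c₁ c₂ : E → Bool} {v : V}

theorem fourLabel_mem_image_iff (hh : FiniteFibers h) (i j : Bool) :
    fourLabel i j ∈ (fun e ↦ fourLabel (c₁ e) (c₂ e)) '' (h ⁻¹' {v}) ↔
      0 < fiberCard (fun e ↦ ((h e, c₁ e), c₂ e)) ((v, i), j) := by
  rw [fiberCard, Set.ncard_pos ((hh.prodMk c₁).prodMk c₂ _)]
  simp [Set.Nonempty, fourLabel_inj, and_assoc]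

theorem fourLabel_image_congr {g : E → V} (hh : FiniteFibers h) (hg : FiniteFibers g)
    (hhg : ∀ i j, fiberCard (fun e ↦ ((h e, c₁ e), c₂ e)) ((v, i), j) =
      fiberCard (fun e ↦ ((g e, c₁ e), c₂ e)) ((v, i), j)) :
    (fun e ↦ fourLabel (c₁ e) (c₂ e)) '' (h ⁻¹' {v}) =
      (fun e ↦ fourLabel (c₁ e) (c₂ e)) '' (g ⁻¹' {v}) := by
  have hmem (i j : Bool) := (fourLabel_mem_image_iff hh i j).trans
    ((hhg i j) ▸ (fourLabel_mem_image_iff hg i j).symm)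
  apply Set.Subset.antisymm <;> rintro _ ⟨e, he, rfl⟩
  exacts [(hmem _ _).1 ⟨e, he, rfl⟩, (hmem _ _).2 ⟨e, he, rfl⟩]

theorem injOn_fourLabel (hh : FiniteFibers h)
    (hle : ∀ i j, fiberCard (fun e ↦ ((h e, c₁ e), c₂ e)) ((v, i), j) ≤ 1) :
    Set.InjOn (fun e ↦ fourLabel (c₁ e) (c₂ e)) (h ⁻¹' {v}) := by
  intro e he e' he' hee'
  obtain ⟨h₁, h₂⟩ := fourLabel_inj.1 hee'
  refine (Set.ncard_le_one ((hh.prodMk c₁).prodMk c₂ _)).1 (hle (c₁ e) (c₂ e)) e ?_ e' ?_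
  · simpa using he
  · simpa [h₁, h₂] using he'

theorem isCyclicIntervalOn_fourLabel (hh : FiniteFibers h) (hcard : fiberCard h v ≤ 4)
    (h₁ : ∀ i, fiberCard (fun e ↦ (h e, c₁ e)) (v, i) ≤
      fiberCard (fun e ↦ (h e, c₁ e)) (v, !i) + 1)
    (h₂ : ∀ i j, fiberCard (fun e ↦ ((h e, c₁ e), c₂ e)) ((v, i), j) ≤
      fiberCard (fun e ↦ ((h e, c₁ e), c₂ e)) ((v, i), !j) + 1) :
    IsCyclicIntervalOn 4 (fun e ↦ fourLabel (c₁ e) (c₂ e)) (h ⁻¹' {v}) := by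
  have hsum₁ := fiberCard_prodMk_add hh c₁ v
  have hsum₂ (i : Bool) := fiberCard_prodMk_add (hh.prodMk c₁) c₂ (v, i)
  have hmaps : Set.MapsTo (fun e ↦ fourLabel (c₁ e) (c₂ e)) (h ⁻¹' {v}) (Set.Icc 1 4) :=
    fun _ _ ↦ fourLabel_mem_Icc _ _
  refine ⟨hmaps, injOn_fourLabel hh ?_,
    isCyclicIntervalSet_of_fourLabel hmaps.image_subset fun i ↦ ?_⟩
  · simp only [Bool.forall_bool, Bool.not_true, Bool.not_false] at h₁ h₂ hsum₂ ⊢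
    omega
  · simp only [fourLabel_mem_image_iff hh, Bool.forall_bool, Bool.exists_bool]
    have := hsum₂ i
    have := hsum₂ !i
    have := h₁ i
    omega

theorem exists_isCyclicIntervalOn_four_of_balanced {f g : E → V} (hf : FiniteFibers f)
    (hg : FiniteFibers g) (hfg : ∀ v, fiberCard f v = fiberCard g v)
    (hcard : ∀ v, fiberCard f v ≤ 4) :
    ∃ a : E → ℕ, ∀ v, IsCyclicIntervalOn 4 a (f ⁻¹' {v}) ∧ IsCyclicIntervalOn 4 a (g ⁻¹' {v}) ∧
      a '' (f ⁻¹' {v}) = a '' (g ⁻¹' {v}) := by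
  obtain ⟨c₁, hc₁⟩ := exists_bool_equitable_of_balanced hf hg hfg
  obtain ⟨c₂, hc₂⟩ := exists_bool_equitable_of_balanced (hf.prodMk c₁) (hg.prodMk c₁)
    fun z ↦ (hc₁ z.1 z.2).1
  refine ⟨fun e ↦ fourLabel (c₁ e) (c₂ e), fun v ↦ ⟨?_, ?_, ?_⟩⟩
  · exact isCyclicIntervalOn_fourLabel hf (hcard v) (fun i ↦ (hc₁ v i).2)
      fun i j ↦ (hc₂ (v, i) j).2
  · refine isCyclicIntervalOn_fourLabel hg (hfg v ▸ hcard v) (fun i ↦ ?_) fun i j ↦ ?_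
    · simpa only [(hc₁ v _).1] using (hc₁ v i).2
    · simpa only [(hc₂ (v, _) _).1] using (hc₂ (v, i) j).2
  · exact fourLabel_image_congr hf hg fun i j ↦ (hc₂ (v, i) j).1

end FourLabels

section Multigraph

variable {E V X Y : Type*}

/-- The tail of the edge `e` with ends `f e` and `g e`, if it is directed away from `f e` exactly
when `c e = true`. Its head is the tail for the complementary choice `fun e ↦ !c e`. -/
def orientedTail (f : E → X) (g : E → Y) (c : E → Bool) (e : E) : X ⊕ Y :=
  bif c e then .inl (f e) else .inr (g e)

theorem orientedTail_preimage_inl (f : E → X) (g : E → Y) (c : E → Bool) (x : X) :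
    orientedTail f g c ⁻¹' {.inl x} = (fun e ↦ (f e, c e)) ⁻¹' {(x, true)} := by
  ext e
  cases h : c e <;> simp [orientedTail, h]

theorem orientedTail_preimage_inr (f : E → X) (g : E → Y) (c : E → Bool) (y : Y) :
    orientedTail f g c ⁻¹' {.inr y} = (fun e ↦ (g e, c e)) ⁻¹' {(y, false)} := by
  ext e
  cases h : c e <;> simp [orientedTail, h]

theorem FiniteFibers.orientedTail {f : E → X} {g : E → Y} (hf : FiniteFibers f)
    (hg : FiniteFibers g) (c : E → Bool) : FiniteFibers (orientedTail f g c) := by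
  rintro (x | y)
  · exact orientedTail_preimage_inl f g c x ▸ hf.prodMk c _
  · exact orientedTail_preimage_inr f g c y ▸ hg.prodMk c _

theorem exists_isCyclicIntervalOn_eight_of_even {f : E → X} {g : E → Y} (hf : FiniteFibers f)
    (hg : FiniteFibers g) (hf_even : ∀ x, Even (fiberCard f x))
    (hg_even : ∀ y, Even (fiberCard g y)) (hf_le : ∀ x, fiberCard f x ≤ 8)
    (hg_le : ∀ y, fiberCard g y ≤ 8) :
    ∃ c : E → ℕ, (∀ x, IsCyclicIntervalOn 8 c (f ⁻¹' {x})) ∧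
      ∀ y, IsCyclicIntervalOn 8 c (g ⁻¹' {y}) := by
  obtain ⟨b, hbf, hbg⟩ := exists_bool_equitable_of_even hf hg hf_even hg_even
  have hbalanced (z : X ⊕ Y) :
      fiberCard (orientedTail f g b) z = fiberCard (orientedTail f g fun e ↦ !b e) z := by
    rcases z with x | y <;>
      simp only [fiberCard, orientedTail_preimage_inl, orientedTail_preimage_inr,
        preimage_prodMk_not, Bool.not_true, Bool.not_false]
    exacts [hbf x, (hbg y).symm]
  have hle (z : X ⊕ Y) : fiberCard (orientedTail f g b) z ≤ 4 := by
    rcases z with x | y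
    · have := fiberCard_prodMk_add hf b x
      have := hbf x
      have := hf_le x
      rw [fiberCard, orientedTail_preimage_inl, ← fiberCard]
      omega
    · have := fiberCard_prodMk_add hg b y
      have := hbg y
      have := hg_le y
      rw [fiberCard, orientedTail_preimage_inr, ← fiberCard]
      omega
  obtain ⟨a, ha⟩ := exists_isCyclicIntervalOn_four_of_balanced (hf.orientedTail hg b)
    (hf.orientedTail hg _) hbalanced hle
  simp only [Sum.forall, orientedTail_preimage_inl, orientedTail_preimage_inr,
    preimage_prodMk_not, Bool.not_true, Bool.not_false] at ha
  refine ⟨fun e ↦ 2 * a e - (b e).toNat, fun x ↦ ?_, fun y ↦ ?_⟩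
  · obtain ⟨htail, hhead, himage⟩ := ha.1 x
    exact isCyclicIntervalOn_two_mul_sub (Bool.forall_bool.2 ⟨hhead, htail⟩)
      (Bool.forall_bool.2 ⟨himage.symm, rfl⟩)
  · obtain ⟨htail, hhead, himage⟩ := ha.2 y
    exact isCyclicIntervalOn_two_mul_sub (Bool.forall_bool.2 ⟨htail, hhead⟩)
      (Bool.forall_bool.2 ⟨himage, rfl⟩)

theorem IsCyclicIntervalOn.of_sumElim_odd {f : E → V} {d : V → ℕ} {v : V}
    {c : E ⊕ {v // Odd (d v)} → ℕ} (hc : IsCyclicIntervalOn 8 c (Sum.elim f Subtype.val ⁻¹' {v}))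
    (hfd : fiberCard f v = d v) (hd : d v ∈ ({0, 1, 2, 4, 6, 7, 8} : Set ℕ)) :
    IsCyclicIntervalOn 8 (c ∘ Sum.inl) (f ⁻¹' {v}) := by
  rw [← isCyclicIntervalOn_image Sum.inl_injective]
  rw [preimage_sumElim_singleton] at hc
  rcases Nat.even_or_odd (d v) with heven | hodd
  · simpa only [preimage_subtypeVal_singleton_eq_empty (P := fun v ↦ Odd (d v)) (x := v)
      (Nat.not_odd_iff_even.2 heven), Set.image_empty, Set.union_empty] using hc
  · refine hc.mono_of_ncard Set.subset_union_left ?_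
    rw [Set.ncard_image_of_injective _ Sum.inl_injective, ← fiberCard, hfd]
    simp only [Set.mem_insert_iff, Set.mem_singleton_iff] at hd
    rw [Nat.odd_iff] at hodd
    omega

theorem exists_isCyclicIntervalOn_eight_of_balanced {f g : E → V} (hf : FiniteFibers f)
    (hg : FiniteFibers g) (hfg : ∀ v, fiberCard f v = fiberCard g v)
    (hd : ∀ v, fiberCard f v ∈ ({0, 1, 2, 4, 6, 7, 8} : Set ℕ)) :
    ∃ c : E → ℕ, ∀ v, IsCyclicIntervalOn 8 c (f ⁻¹' {v}) ∧ IsCyclicIntervalOn 8 c (g ⁻¹' {v}) := by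
  let loop : {v // Odd (fiberCard f v)} → V := Subtype.val
  have hloop : FiniteFibers loop := finiteFibers_of_injective Subtype.val_injective
  have hcard {h : E → V} (hh : FiniteFibers h) (hfh : ∀ v, fiberCard f v = fiberCard h v) (v : V) :
      Even (fiberCard (Sum.elim h loop) v) ∧ fiberCard (Sum.elim h loop) v ≤ 8 := by
    have hd_v := hd v
    simp only [Set.mem_insert_iff, Set.mem_singleton_iff] at hd_v
    rw [fiberCard_sumElim hh hloop, fiberCard_subtypeVal_odd, ← hfh, Nat.even_iff]
    omega
  have hcard_f := hcard hf fun _ ↦ rfl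
  have hcard_g := hcard hg hfg
  obtain ⟨c, hcf, hcg⟩ := exists_isCyclicIntervalOn_eight_of_even (hf.sumElim hloop)
    (hg.sumElim hloop) (fun v ↦ (hcard_f v).1) (fun v ↦ (hcard_g v).1)
    (fun v ↦ (hcard_f v).2) fun v ↦ (hcard_g v).2
  exact ⟨c ∘ Sum.inl, fun v ↦ ⟨(hcf v).of_sumElim_odd rfl (hd v),
    (hcg v).of_sumElim_odd (hfg v).symm (hd v)⟩⟩

theorem preimage_sumMap_inl (f : E → X) (g : E → Y) (x : X) :
    Sum.map f g ⁻¹' {.inl x} = Sum.inl '' (f ⁻¹' {x}) := by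
  ext (e | e) <;> simp

theorem preimage_sumMap_inr (f : E → X) (g : E → Y) (y : Y) :
    Sum.map f g ⁻¹' {.inr y} = Sum.inr '' (g ⁻¹' {y}) := by
  ext (e | e) <;> simp

-- The two orientations of all edges together form a balanced digraph.
theorem exists_isCyclicIntervalOn_eight {f : E → X} {g : E → Y} (hf : FiniteFibers f)
    (hg : FiniteFibers g) (hf_deg : ∀ x, fiberCard f x ∈ ({0, 1, 2, 4, 6, 7, 8} : Set ℕ))
    (hg_deg : ∀ y, fiberCard g y ∈ ({0, 1, 2, 4, 6, 7, 8} : Set ℕ)) :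
    ∃ c : E → ℕ, (∀ x, IsCyclicIntervalOn 8 c (f ⁻¹' {x})) ∧
      ∀ y, IsCyclicIntervalOn 8 c (g ⁻¹' {y}) := by
  let tail : E ⊕ E → X ⊕ Y := Sum.map f g
  let swap : Equiv.Perm (E ⊕ E) := Equiv.sumComm E E
  have htail : FiniteFibers tail := by
    rintro (x | y)
    · exact preimage_sumMap_inl f g x ▸ (hf x).image _
    · exact preimage_sumMap_inr f g y ▸ (hg y).image _
  have hhead : FiniteFibers (tail ∘ swap) := fun z ↦ by
    rw [Set.preimage_comp]
    exact (htail z).preimage swap.injective.injOn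
  have hdeg (z : X ⊕ Y) : fiberCard tail z ∈ ({0, 1, 2, 4, 6, 7, 8} : Set ℕ) := by
    rcases z with x | y
    · rw [fiberCard, preimage_sumMap_inl, Set.ncard_image_of_injective _ Sum.inl_injective]
      exact hf_deg x
    · rw [fiberCard, preimage_sumMap_inr, Set.ncard_image_of_injective _ Sum.inr_injective]
      exact hg_deg y
  obtain ⟨c, hc⟩ := exists_isCyclicIntervalOn_eight_of_balanced htail hhead
    (fun z ↦ (fiberCard_comp_perm tail swap z).symm) hdeg
  have hhead_inr (y : Y) : (tail ∘ swap) ⁻¹' {.inr y} = Sum.inl '' (g ⁻¹' {y}) := by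
    ext (e | e) <;> simp [tail, swap]
  refine ⟨c ∘ Sum.inl, fun x ↦ ?_, fun y ↦ ?_⟩ <;>
    rw [← isCyclicIntervalOn_image Sum.inl_injective]
  · exact preimage_sumMap_inl f g x ▸ (hc (.inl x)).1
  · exact hhead_inr y ▸ (hc (.inr y)).2

end Multigraph

section EndOfColor

variable {V : Type*} {G : SimpleGraph V}

theorem isCyclicIntervalColoring_of_incidenceSet {t : ℕ} {c : Sym2 V → ℕ}
    (hc : ∀ v, IsCyclicIntervalOn t c (G.incidenceSet v)) : IsCyclicIntervalColoring G t c := by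
  refine ⟨⟨fun e he ↦ ?_, ?_⟩, fun v ↦ (hc v).isCyclicIntervalSet⟩
  · exact (hc e.out.1).mapsTo ⟨he, e.out_fst_mem⟩
  · rintro e₁ he₁ e₂ he₂ hne ⟨v, hv₁, hv₂⟩ heq
    exact hne ((hc v).injOn ⟨he₁, hv₁⟩ ⟨he₂, hv₂⟩ heq)

/-- `f` sends every edge to its end of color `i`. -/
def IsEndOfColor (C : G.Coloring (Fin 2)) (i : Fin 2) (f : G.edgeSet → V) : Prop :=
  ∀ e v, f e = v ↔ v ∈ e.1 ∧ C v = i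

variable {C : G.Coloring (Fin 2)} {i : Fin 2} {f : G.edgeSet → V} {v : V}

theorem exists_isEndOfColor (C : G.Coloring (Fin 2)) (i : Fin 2) : ∃ f, IsEndOfColor C i f := by
  have hend (e : G.edgeSet) : ∃ w, ∀ v, w = v ↔ v ∈ e.1 ∧ C v = i := by
    obtain ⟨⟨a, b⟩, hab⟩ := e
    have hC : C a ≠ C b := C.valid hab
    simp only [Sym2.mem_iff]
    by_cases ha : C a = i
    · exact ⟨a, by grind⟩
    · exact ⟨b, by grind⟩
  choose f hf using hend
  exact ⟨f, hf⟩

theorem IsEndOfColor.image_preimage_of_eq (hf : IsEndOfColor C i f) (hv : C v = i) :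
    Subtype.val '' (f ⁻¹' {v}) = G.incidenceSet v := by
  ext e
  simp [hf _ _, hv, SimpleGraph.incidenceSet, and_comm]

theorem IsEndOfColor.preimage_of_ne (hf : IsEndOfColor C i f) (hv : C v ≠ i) :
    f ⁻¹' {v} = ∅ := by
  ext e
  simp [hf _ _, hv]

theorem IsEndOfColor.finiteFibers [G.LocallyFinite] (hf : IsEndOfColor C i f) :
    FiniteFibers f := fun v ↦ by
  classical
  by_cases hv : C v = i
  · apply Set.Finite.of_finite_image _ Subtype.val_injective.injOn
    rw [hf.image_preimage_of_eq hv]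
    exact Finite.of_equiv _ (G.incidenceSetEquivNeighborSet v).symm
  · simp [hf.preimage_of_ne hv]

theorem IsEndOfColor.fiberCard [G.LocallyFinite] (hf : IsEndOfColor C i f) (v : V) :
    fiberCard f v = if C v = i then G.degree v else 0 := by
  classical
  split_ifs with hv
  · rw [_root_.fiberCard, ← Set.ncard_image_of_injective _ Subtype.val_injective,
      hf.image_preimage_of_eq hv, ← Nat.card_coe_set_eq,
      Nat.card_congr (G.incidenceSetEquivNeighborSet v), Nat.card_eq_fintype_card,
      G.card_neighborSet_eq_degree]
  · simp [_root_.fiberCard, hf.preimage_of_ne hv]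

end EndOfColor

theorem stmt_7_general {V : Type*} (G : SimpleGraph V) [G.LocallyFinite] (hbip : G.Colorable 2)
    (hdeg : ∀ v : V, G.degree v ∈ ({0, 1, 2, 4, 6, 7, 8} : Set ℕ)) :
    ∃ c : Sym2 V → ℕ, IsCyclicIntervalColoring G 8 c := by
  obtain ⟨C⟩ := hbip
  choose ends hends using exists_isEndOfColor C
  have hcard (i : Fin 2) (v : V) :
      fiberCard (ends i) v ∈ ({0, 1, 2, 4, 6, 7, 8} : Set ℕ) := by
    rw [(hends i).fiberCard]
    split_ifs
    exacts [hdeg v, Or.inl rfl]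
  obtain ⟨c, hc₀, hc₁⟩ := exists_isCyclicIntervalOn_eight (hends 0).finiteFibers
    (hends 1).finiteFibers (hcard 0) (hcard 1)
  refine ⟨Function.extend Subtype.val c 0, isCyclicIntervalColoring_of_incidenceSet fun v ↦ ?_⟩
  rw [← (hends (C v)).image_preimage_of_eq rfl,
    isCyclicIntervalOn_image Subtype.val_injective, Function.extend_comp Subtype.val_injective]
  generalize C v = i
  fin_cases i
  exacts [hc₀ v, hc₁ v]

/-- every finite bipartite graph in which all vertex degrees lie in
`{1, 2, 4, 6, 7, 8}` has a cyclic interval `t`-coloring for some positive `t`. -/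
theorem stmt_7 {V : Type*} [Fintype V] (G : SimpleGraph V) [DecidableRel G.Adj]
    (hbip : G.Colorable 2)
    (hdeg : ∀ v : V, G.degree v ∈ ({1, 2, 4, 6, 7, 8} : Set ℕ)) :
    ∃ t : ℕ, 0 < t ∧ ∃ c : Sym2 V → ℕ, IsCyclicIntervalColoring G t c :=
  ⟨8, by norm_num, stmt_7_general G hbip fun v ↦ Or.inr (hdeg v)⟩
end

section
/- Let r ≥ 2 be an integer and let G be a finite (2r−2, 2r)-biregular graph. Then G has a cyclic interval 2r-coloring, and the least t for which G has a cyclic interval t-coloring equals 2r. -/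
open SimpleGraph

/-- An `(a,b)`-biregular graph: the vertex set is partitioned into two nonempty
independent parts `X` and `Xᶜ`, every edge joins the parts, every vertex of `X`
has degree `a`, and every vertex of `Xᶜ` has degree `b`. -/
def IsBiregular {V : Type*} [Fintype V] (G : SimpleGraph V) [DecidableRel G.Adj]
    (a b : ℕ) : Prop :=
  ∃ X : Set V, X.Nonempty ∧ Xᶜ.Nonempty ∧
    (∀ u v : V, G.Adj u v → (u ∈ X ↔ v ∉ X)) ∧
    (∀ v ∈ X, G.degree v = a) ∧ (∀ v ∈ Xᶜ, G.degree v = b)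

/-!
Split the edges into two classes `0` and `1` that each contain exactly half of the edges at every
vertex, so `r - 1` at a vertex of degree `2r - 2` and `r` at one of degree `2r`. Form a bipartite
multigraph by orienting class `0` from `X` to `Y`, class `1` from `Y` to `X`, adding a loop at every
vertex of `X`, and letting each arc join the out-copy of its tail to the in-copy of its head. It has
maximum degree `r`, so Kőnig's edge coloring theorem colors it with `r` colors. Giving an edge of
class `h` and Kőnig color `c` the color `2c + h + 1` yields a proper coloring. At a vertex
`x ∈ X` both classes avoid the color `m` of the loop, so `2m + 1` and `2m + 2` are missing at `x`,
and by counting nothing else is; at a vertex of degree `2r` no color is missing.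

The halving is again Kőnig's theorem: split each vertex into vertices of degree at most two.
-/

section Multigraph

open Finset

variable {E E' A A' B W ι κ : Type*}

/-- Edges with the same image under `s` get different values of `c`. A bipartite multigraph is
encoded by its type `E` of edges together with two end maps `s : E → A` and `t : E → B`; a proper
edge coloring `c` of it is one that satisfies `InjOnFibers s c` and `InjOnFibers t c`. -/
def InjOnFibers (s : E → A) (c : E → ι) : Prop :=
  ∀ ⦃e e' : E⦄, s e = s e' → c e = c e' → e = e'

namespace InjOnFibers

theorem prodMk_left_iff {s : E → A} {c : E → ι} {c' : E → κ} :
    InjOnFibers (fun e ↦ (s e, c e)) c' ↔ InjOnFibers s fun e ↦ (c e, c' e) := by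
  simp only [InjOnFibers, Prod.mk.injEq, and_imp]

theorem prodMk_comm {s : E → A} {c : E → ι} {c' : E → κ}
    (h : InjOnFibers s fun e ↦ (c e, c' e)) : InjOnFibers s fun e ↦ (c' e, c e) :=
  fun _ _ hs hc ↦ h hs (Prod.ext (congrArg Prod.snd hc) (congrArg Prod.fst hc))

theorem comp_injective {s : E → A} {c : E → ι} (h : InjOnFibers s c) {f : ι → κ}
    (hf : f.Injective) : InjOnFibers s fun e ↦ f (c e) :=
  fun _ _ hs hc ↦ h hs (hf hc)

theorem restrict {s : E → A} {s' : E' → A'} {c : E' → ι} (h : InjOnFibers s' c) {f : E → E'}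
    (hf : f.Injective) {g : A → A'} (hg : ∀ e, s' (f e) = g (s e)) :
    InjOnFibers s fun e ↦ c (f e) :=
  fun e e' hs hc ↦ hf (h (by rw [hg, hg, hs]) hc)

theorem card_fiber_le [Fintype E] [DecidableEq A] [Fintype ι] {s : E → A} {c : E → ι}
    (h : InjOnFibers s c) (a : A) : #{e | s e = a} ≤ Fintype.card ι :=
  card_le_card_of_injOn c (fun _ _ ↦ mem_univ _) fun e he e' he' hc ↦
    h ((mem_filter_univ e).1 he |>.trans ((mem_filter_univ e').1 he').symm) hc

end InjOnFibers

theorem exists_injOnFibers [Fintype E] [DecidableEq A] [Fintype ι] {s : E → A}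
    (hs : ∀ a, #{e | s e = a} ≤ Fintype.card ι) : ∃ c : E → ι, InjOnFibers s c := by
  have hemb (a : A) : Nonempty ({e // s e = a} ↪ ι) :=
    Function.Embedding.nonempty_of_card_le (by simpa only [Fintype.card_subtype] using hs a)
  let g (a : A) : {e // s e = a} ↪ ι := (hemb a).some
  refine ⟨fun e ↦ g (s e) ⟨e, rfl⟩, fun e e' hs hc ↦ ?_⟩
  have hg {a : A} (ha : s e = a) : g (s e) ⟨e, rfl⟩ = g a ⟨e, ha⟩ := by subst ha; rfl
  exact congrArg Subtype.val ((g (s e')).injective ((hg hs).symm.trans hc))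

theorem exists_rightInverse_comp_injective [Fintype E] [DecidableEq A] [DecidableEq B] {s : E → A}
    {t : E → B} {d : ℕ} (hd : 0 < d) (hs : ∀ a, d ≤ #{e | s e = a})
    (ht : ∀ b, #{e | t e = b} ≤ d) :
    ∃ f : A → E, Function.RightInverse f s ∧ (t ∘ f).Injective := by
  -- Hall's condition: the at least `d * #S` edges with left end in `S` are covered by their right
  -- ends, each of which meets at most `d` edges.
  have hall (S : Finset A) : #S ≤ #(S.biUnion fun a ↦ ({e | s e = a} : Finset E).image t) := by
    set T : Finset E := {e | s e ∈ S}
    have hT : S.biUnion (fun a ↦ ({e | s e = a} : Finset E).image t) = T.image t := by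
      ext b; simp [T]
    refine Nat.le_of_mul_le_mul_left (?_ : d * #S ≤ d * _) hd
    calc d * #S ≤ #T := mul_card_image_le_card_of_maps_to (f := s) (by simp [T]) d fun a ha ↦ by
          refine (hs a).trans (card_le_card fun e he ↦ ?_)
          obtain rfl := (mem_filter_univ e).1 he
          exact mem_filter.2 ⟨(mem_filter_univ e).2 ha, rfl⟩
      _ ≤ d * #(T.image t) := card_le_mul_card_image T d fun b _ ↦
          (card_le_card (filter_subset_filter _ (subset_univ T))).trans (ht b)
      _ = _ := by rw [hT]
  obtain ⟨g, hg_inj, hg⟩ := (all_card_le_biUnion_card_iff_exists_injective _).1 hall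
  simp only [mem_image, mem_filter_univ] at hg
  choose f hsf htf using hg
  exact ⟨f, hsf, by rwa [show t ∘ f = g from funext htf]⟩

theorem card_fiber_compl_range_add_one [Fintype E] [DecidableEq W] {s : E → W} {f : W → E}
    [DecidablePred (· ∈ Set.range f)] (hsf : (s ∘ f).Bijective) (w : W) :
    #{e : {e // e ∉ Set.range f} | s e = w} + 1 = #{e | s e = w} := by
  obtain ⟨v, hv⟩ := hsf.surjective w
  have hrange : ({e | s e = w ∧ e ∈ Set.range f} : Finset E) = {f v} := by
    ext e
    simp only [mem_filter_univ, mem_singleton]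
    constructor
    · rintro ⟨he, u, rfl⟩
      rw [hsf.injective (he.trans hv.symm)]
    · rintro rfl
      exact ⟨hv, v, rfl⟩
  have hcompl : #{e : {e // e ∉ Set.range f} | s e = w} = #{e | s e = w ∧ e ∉ Set.range f} := by
    rw [← card_map (Function.Embedding.subtype _)]
    congr 1
    ext e
    simp [and_comm]
  rw [← card_filter_add_card_filter_not (s := {e | s e = w}) (· ∈ Set.range f), filter_filter,
    filter_filter, hrange, hcompl, card_singleton, add_comm]

theorem InjOnFibers.extend_last {s : E → A} {f : W → E} [DecidablePred (· ∈ Set.range f)]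
    (hsf : (s ∘ f).Injective) {d : ℕ} {c : {e // e ∉ Set.range f} → Fin d}
    (hc : InjOnFibers (fun e : {e // e ∉ Set.range f} ↦ s e) c) :
    InjOnFibers s fun e ↦
      if he : e ∈ Set.range f then Fin.last d else (c ⟨e, he⟩).castSucc := by
  intro e e' hs hcol
  by_cases he : e ∈ Set.range f <;> by_cases he' : e' ∈ Set.range f <;>
    simp only [he, he', dite_true, dite_false] at hcol
  · obtain ⟨w, rfl⟩ := he
    obtain ⟨w', rfl⟩ := he'
    rw [hsf hs]
  · exact absurd hcol.symm (Fin.castSucc_ne_last _)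
  · exact absurd hcol (Fin.castSucc_ne_last _)
  · exact congrArg Subtype.val (hc (e := ⟨e, he⟩) (e' := ⟨e', he'⟩) hs
      (Fin.castSucc_injective d hcol))

theorem exists_edgeColoring_of_regular [Finite W] [DecidableEq W] {d : ℕ} [Fintype E] {s t : E → W}
    (hs : ∀ w, #{e | s e = w} = d) (ht : ∀ w, #{e | t e = w} = d) :
    ∃ c : E → Fin d, InjOnFibers s c ∧ InjOnFibers t c := by
  classical
  induction d generalizing E with
  | zero =>
    have : IsEmpty E := ⟨fun e ↦
      filter_eq_empty_iff.1 (card_eq_zero.1 (hs (s e))) (mem_univ e) rfl⟩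
    exact ⟨isEmptyElim, fun e ↦ isEmptyElim e, fun e ↦ isEmptyElim e⟩
  | succ d ih =>
    obtain ⟨f, hsf, htf⟩ := exists_rightInverse_comp_injective d.succ_pos (fun w ↦ (hs w).ge)
      (fun w ↦ (ht w).le)
    have hsf_bij : (s ∘ f).Bijective := by
      rw [show s ∘ f = id from funext hsf]; exact Function.bijective_id
    have htf_bij : (t ∘ f).Bijective := Finite.injective_iff_bijective.1 htf
    obtain ⟨c, hcs, hct⟩ := ih (E := {e // e ∉ Set.range f}) (s := fun e ↦ s e) (t := fun e ↦ t e)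
      (fun w ↦ by have := card_fiber_compl_range_add_one hsf_bij w; have := hs w; omega)
      (fun w ↦ by have := card_fiber_compl_range_add_one htf_bij w; have := ht w; omega)
    exact ⟨_, hcs.extend_last hsf_bij.injective, hct.extend_last htf⟩

theorem card_fiber_sumElim [Fintype E] [Fintype E'] [DecidableEq A] (s : E → A) (t : E' → A)
    (a : A) : #{e | Sum.elim s t e = a} = #{e | s e = a} + #{e | t e = a} := by
  simp only [card_filter]
  exact Fintype.sum_sum_type _

theorem exists_edgeColoring_of_balanced [Finite W] [DecidableEq W] [Fintype E] {s t : E → W}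
    {d : ℕ} (hst : ∀ w, #{e | s e = w} = #{e | t e = w}) (hs : ∀ w, #{e | s e = w} ≤ d) :
    ∃ c : E → Fin d, InjOnFibers s c ∧ InjOnFibers t c := by
  have := Fintype.ofFinite W
  let loopEnd : (Σ w : W, Fin (d - #{e | s e = w})) → W := Sigma.fst
  have hloop (w : W) : #{l | loopEnd l = w} = d - #{e | s e = w} := by
    rw [← Fintype.card_subtype, Fintype.card_congr (Equiv.sigmaSubtype w), Fintype.card_fin]
  have hreg (u : E → W) (hu : ∀ w, #{e | s e = w} = #{e | u e = w}) (w : W) :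
      #{e | Sum.elim u loopEnd e = w} = d := by
    rw [card_fiber_sumElim, hloop, ← hu, Nat.add_sub_cancel' (hs w)]
  obtain ⟨c, hcs, hct⟩ := exists_edgeColoring_of_regular (hreg s fun _ ↦ rfl) (hreg t hst)
  exact ⟨fun e ↦ c (Sum.inl e), hcs.restrict Sum.inl_injective (g := id) fun _ ↦ rfl,
    hct.restrict Sum.inl_injective (g := id) fun _ ↦ rfl⟩

/-- **Kőnig's edge coloring theorem.** The disjoint union of the multigraph and its reverse is
balanced. -/
theorem exists_edgeColoring_of_card_fiber_le [Finite A] [DecidableEq A] [Finite B]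
    [DecidableEq B] [Fintype E] {s : E → A} {t : E → B} {d : ℕ}
    (hs : ∀ a, #{e | s e = a} ≤ d) (ht : ∀ b, #{e | t e = b} ≤ d) :
    ∃ c : E → Fin d, InjOnFibers s c ∧ InjOnFibers t c := by
  have hswap (w : A ⊕ B) : #{e | Sum.map s t e = w} = #{e : E ⊕ E | Sum.map s t e.swap = w} :=
    card_equiv (Equiv.sumComm E E) (by simp)
  have hle (w : A ⊕ B) : #{e | Sum.map s t e = w} ≤ d := by
    rw [Sum.map, card_fiber_sumElim]
    rcases w with a | b
    · simpa using hs a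
    · simpa using ht b
  obtain ⟨c, hcs, hct⟩ := exists_edgeColoring_of_balanced hswap hle
  exact ⟨fun e ↦ c (Sum.inl e), hcs.restrict Sum.inl_injective fun _ ↦ rfl,
    hct.restrict Sum.inl_injective fun _ ↦ rfl⟩

theorem exists_equitable_split [Finite A] [DecidableEq A] [Finite B] [DecidableEq B] [Fintype E]
    {s : E → A} {t : E → B} {l m n : ℕ} (hs : ∀ a, #{e | s e = a} ≤ l * m)
    (ht : ∀ b, #{e | t e = b} ≤ l * n) :
    ∃ h : E → Fin l, (∀ a i, #{e | (s e, h e) = (a, i)} ≤ m) ∧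
      ∀ b i, #{e | (t e, h e) = (b, i)} ≤ n := by
  obtain ⟨φ, hφ⟩ := exists_injOnFibers (s := s) (ι := Fin m × Fin l)
    (by simpa [mul_comm] using hs)
  obtain ⟨ψ, hψ⟩ := exists_injOnFibers (s := t) (ι := Fin n × Fin l)
    (by simpa [mul_comm] using ht)
  obtain ⟨h, hhs, hht⟩ := exists_edgeColoring_of_card_fiber_le
    (s := fun e ↦ (s e, (φ e).1)) (t := fun e ↦ (t e, (ψ e).1)) (d := l)
    (fun a ↦ by simpa using (InjOnFibers.prodMk_left_iff.2 hφ).card_fiber_le a)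
    (fun b ↦ by simpa using (InjOnFibers.prodMk_left_iff.2 hψ).card_fiber_le b)
  have hs' := InjOnFibers.prodMk_left_iff.2 (InjOnFibers.prodMk_left_iff.1 hhs).prodMk_comm
  have ht' := InjOnFibers.prodMk_left_iff.2 (InjOnFibers.prodMk_left_iff.1 hht).prodMk_comm
  exact ⟨h, fun a i ↦ by simpa using hs'.card_fiber_le (a, i),
    fun b i ↦ by simpa using ht'.card_fiber_le (b, i)⟩

/-- An end map of the auxiliary multigraph whose edges are those of the multigraph `(p, q)` and one
loop at each vertex in `A`. The edges of class `i` keep their end in `A` and the others their end in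
`B`, so that `switchedEnd p q h 0` and `switchedEnd p q h 1` give opposite ends. -/
def switchedEnd (p : E → A) (q : E → B) (h : E → Fin 2) (i : Fin 2) : E ⊕ A → A ⊕ B :=
  Sum.elim (fun e ↦ if h e = i then Sum.inl (p e) else Sum.inr (q e)) Sum.inl

theorem card_fiber_switchedEnd_inl [Fintype A] [DecidableEq A] [DecidableEq B] [Fintype E]
    (p : E → A) (q : E → B) (h : E → Fin 2) (i : Fin 2) (a : A) :
    #{z | switchedEnd p q h i z = Sum.inl a} = #{e | (p e, h e) = (a, i)} + 1 := by
  have hedge (e : E) : (if h e = i then Sum.inl (p e) else Sum.inr (q e)) = Sum.inl a ↔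
      (p e, h e) = (a, i) := by
    split_ifs with hi <;> simp [hi]
  rw [switchedEnd, card_fiber_sumElim]
  simp [hedge, filter_eq']

theorem card_fiber_switchedEnd_inr [Fintype A] [DecidableEq A] [DecidableEq B] [Fintype E]
    (p : E → A) (q : E → B) (h : E → Fin 2) (i : Fin 2) (b : B) :
    #{z | switchedEnd p q h i z = Sum.inr b} = #{e | (q e, h e) = (b, i + 1)} := by
  have hother (j : Fin 2) : j = i + 1 ↔ j ≠ i := by revert i j; decide
  have hedge (e : E) : (if h e = i then Sum.inl (p e) else Sum.inr (q e)) = Sum.inr b ↔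
      (q e, h e) = (b, i + 1) := by
    rw [Prod.mk.injEq, hother]
    split_ifs with hi <;> simp [hi]
  rw [switchedEnd, card_fiber_sumElim]
  simp [hedge]

theorem exists_edgeColoring_missing_color [Finite A] [DecidableEq A] [Finite B]
    [DecidableEq B] [Fintype E] {p : E → A} {q : E → B} {k : ℕ} (hp : ∀ a, #{e | p e = a} ≤ 2 * k)
    (hq : ∀ b, #{e | q e = b} ≤ 2 * (k + 1)) :
    ∃ (c : E → Fin (k + 1) × Fin 2) (m : A → Fin (k + 1)),
      InjOnFibers p c ∧ InjOnFibers q c ∧ ∀ e, (c e).1 ≠ m (p e) := by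
  have := Fintype.ofFinite A
  obtain ⟨h, hph, hqh⟩ := exists_equitable_split hp hq
  have hdeg (i : Fin 2) (w : A ⊕ B) : #{z | switchedEnd p q h i z = w} ≤ k + 1 := by
    rcases w with a | b
    · rw [card_fiber_switchedEnd_inl]; exact Nat.succ_le_succ (hph a i)
    · rw [card_fiber_switchedEnd_inr]; exact hqh b (i + 1)
  obtain ⟨c, hc₀, hc₁⟩ := exists_edgeColoring_of_card_fiber_le (hdeg 0) (hdeg 1)
  have hc (i : Fin 2) : InjOnFibers (switchedEnd p q h i) c := by
    fin_cases i; exacts [hc₀, hc₁]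
  refine ⟨fun e ↦ (c (Sum.inl e), h e), fun a ↦ c (Sum.inr a), ?_, ?_, ?_⟩
  · rintro e e' hpe hce
    obtain ⟨hce, hhe⟩ := Prod.mk.inj hce
    exact Sum.inl_injective (hc (h e) (by simp [switchedEnd, hpe, hhe]) hce)
  · rintro e e' hqe hce
    obtain ⟨hce, hhe⟩ := Prod.mk.inj hce
    exact Sum.inl_injective (hc (h e + 1) (by simp [switchedEnd, hqe, hhe]) hce)
  · intro e hce
    exact Sum.inl_ne_inr (hc (h e) (by simp [switchedEnd]) hce)

end Multigraph

section SimpleGraph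

open Finset

variable {V : Type*} {G : SimpleGraph V} {X Y : Set V}

theorem mem_sym2_iff_eq_of_disjoint (hXY : Disjoint X Y) (x x' : X) (y : Y) :
    (x : V) ∈ s((x' : V), (y : V)) ↔ x' = x := by
  rw [Sym2.mem_iff, Subtype.ext_iff, eq_comm, or_iff_left]
  exact fun hxy ↦ hXY.notMem_of_mem_left x.2 (hxy ▸ y.2)

theorem exists_ends_of_isBipartiteWith (hG : G.IsBipartiteWith X Y) :
    ∃ (p : G.edgeSet → X) (q : G.edgeSet → Y),
      (∀ (e : G.edgeSet) (x : X), ↑x ∈ (e : Sym2 V) ↔ p e = x) ∧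
      ∀ (e : G.edgeSet) (y : Y), ↑y ∈ (e : Sym2 V) ↔ q e = y := by
  have hends (e : G.edgeSet) : ∃ (x : X) (y : Y), (e : Sym2 V) = s(↑x, ↑y) := by
    obtain ⟨⟨v, w⟩, hvw⟩ := e
    rcases hG.mem_of_adj hvw with ⟨hv, hw⟩ | ⟨hv, hw⟩
    · exact ⟨⟨v, hv⟩, ⟨w, hw⟩, rfl⟩
    · exact ⟨⟨w, hw⟩, ⟨v, hv⟩, Sym2.eq_swap⟩
  choose p q hpq using hends
  refine ⟨p, q, fun e x ↦ ?_, fun e y ↦ ?_⟩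
  · rw [hpq]
    exact mem_sym2_iff_eq_of_disjoint hG.disjoint x (p e) (q e)
  · rw [hpq, Sym2.eq_swap]
    exact mem_sym2_iff_eq_of_disjoint hG.disjoint.symm y (q e) (p e)

theorem card_fiber_end_eq_degree [Fintype G.edgeSet] [DecidableEq X] {p : G.edgeSet → X}
    (hp : ∀ (e : G.edgeSet) (x : X), ↑x ∈ (e : Sym2 V) ↔ p e = x) (x : X)
    [Fintype (G.neighborSet x)] : #{e | p e = x} = G.degree x := by
  classical
  rw [← G.card_incidenceFinset_eq_degree, ← card_map (Function.Embedding.subtype _)]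
  congr 1
  ext e
  simp [← hp, SimpleGraph.incidenceSet, and_comm]

theorem isProperEdgeColoring_extend (hG : G.IsBipartiteWith X Y) {p : G.edgeSet → X}
    {q : G.edgeSet → Y} (hp : ∀ (e : G.edgeSet) (x : X), ↑x ∈ (e : Sym2 V) ↔ p e = x)
    (hq : ∀ (e : G.edgeSet) (y : Y), ↑y ∈ (e : Sym2 V) ↔ q e = y) {t : ℕ} {c : G.edgeSet → ℕ}
    (hct : ∀ e, c e ∈ Set.Icc 1 t) (hcp : InjOnFibers p c) (hcq : InjOnFibers q c) :
    IsProperEdgeColoring G t (Function.extend Subtype.val c 0) := by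
  have hc (e : G.edgeSet) : Function.extend Subtype.val c 0 (e : Sym2 V) = c e :=
    Subtype.val_injective.extend_apply c 0 e
  refine ⟨fun e he ↦ (hc ⟨e, he⟩).symm ▸ hct ⟨e, he⟩, ?_⟩
  rintro e he e' he' hne ⟨v, hve, hve'⟩ hcol
  lift e to G.edgeSet using he
  lift e' to G.edgeSet using he'
  rw [hc, hc] at hcol
  refine hne (congrArg Subtype.val ?_)
  obtain ⟨w, hw⟩ := Sym2.mem_iff_exists.1 hve
  have hvw : G.Adj v w := by rw [← mem_edgeSet, ← hw]; exact e.2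
  rcases hG.mem_of_adj hvw with ⟨hv, -⟩ | ⟨hv, -⟩
  · exact hcp (((hp e ⟨v, hv⟩).1 hve).trans ((hp e' ⟨v, hv⟩).1 hve').symm) hcol
  · exact hcq (((hq e ⟨v, hv⟩).1 hve).trans ((hq e' ⟨v, hv⟩).1 hve').symm) hcol

theorem IsProperEdgeColoring.injOn_incidenceSet {t : ℕ} {c : Sym2 V → ℕ}
    (hc : IsProperEdgeColoring G t c) (v : V) : (G.incidenceSet v).InjOn c :=
  fun e he e' he' hcol ↦ by_contra fun hne ↦ hc.2 e he.1 e' he'.1 hne ⟨v, he.2, he'.2⟩ hcol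

theorem IsProperEdgeColoring.colorsAt_subset {t : ℕ} {c : Sym2 V → ℕ}
    (hc : IsProperEdgeColoring G t c) (v : V) : colorsAt G c v ⊆ Set.Icc 1 t :=
  Set.image_subset_iff.2 fun e he ↦ hc.1 e he.1

theorem IsProperEdgeColoring.ncard_colorsAt {t : ℕ} {c : Sym2 V → ℕ}
    (hc : IsProperEdgeColoring G t c) (v : V) [Fintype (G.neighborSet v)] :
    (colorsAt G c v).ncard = G.degree v := by
  classical
  rw [colorsAt, (hc.injOn_incidenceSet v).ncard_image,
    ← G.card_incidenceFinset_eq_degree, ← Set.ncard_coe_finset, coe_incidenceFinset]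

theorem IsProperEdgeColoring.degree_le {t : ℕ} {c : Sym2 V → ℕ}
    (hc : IsProperEdgeColoring G t c) (v : V) [Fintype (G.neighborSet v)] : G.degree v ≤ t := by
  simpa [hc.ncard_colorsAt v] using Set.ncard_le_ncard (hc.colorsAt_subset v) (Set.finite_Icc 1 t)

theorem IsProperEdgeColoring.sdiff_colorsAt_eq {t : ℕ} {c : Sym2 V → ℕ}
    (hc : IsProperEdgeColoring G t c) (v : V) [Fintype (G.neighborSet v)] {I : Set ℕ}
    (hI : I ⊆ Set.Icc 1 t) (hdisj : Disjoint (colorsAt G c v) I)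
    (hcard : t ≤ G.degree v + I.ncard) : Set.Icc 1 t \ colorsAt G c v = I := by
  refine (Set.eq_of_subset_of_ncard_le (Set.subset_sdiff.2 ⟨hI, hdisj.symm⟩) ?_
    ((Set.finite_Icc 1 t).sdiff)).symm
  have hsub := hc.colorsAt_subset v
  rw [Set.ncard_sdiff hsub ((Set.finite_Icc 1 t).subset hsub), hc.ncard_colorsAt v]
  simpa [add_comm] using hcard

theorem exists_isProperEdgeColoring_missing_pair [Fintype V] [DecidableRel G.Adj] {k : ℕ}
    (hG : G.IsBipartiteWith X Y) (hX : ∀ x ∈ X, G.degree x ≤ 2 * k)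
    (hY : ∀ y ∈ Y, G.degree y ≤ 2 * (k + 1)) :
    ∃ c : Sym2 V → ℕ, IsProperEdgeColoring G (2 * (k + 1)) c ∧
      ∀ x ∈ X, ∃ m ≤ k, Disjoint (colorsAt G c x) (Set.Icc (2 * m + 1) (2 * m + 2)) := by
  classical
  obtain ⟨p, q, hp, hq⟩ := exists_ends_of_isBipartiteWith hG
  obtain ⟨c, m, hcp, hcq, hcm⟩ := exists_edgeColoring_missing_color (p := p) (q := q)
    (fun x ↦ (card_fiber_end_eq_degree hp x).trans_le (hX x x.2))
    (fun y ↦ (card_fiber_end_eq_degree hq y).trans_le (hY y y.2))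
  let code (z : Fin (k + 1) × Fin 2) : ℕ := 2 * z.1 + z.2 + 1
  have hcode : code.Injective := by
    rintro ⟨i, j⟩ ⟨i', j'⟩ h
    simp only [code] at h
    simp only [Prod.mk.injEq, Fin.ext_iff]
    omega
  refine ⟨Function.extend Subtype.val (fun e ↦ code (c e)) 0,
    isProperEdgeColoring_extend hG hp hq (fun e ↦ ?_) (hcp.comp_injective hcode)
      (hcq.comp_injective hcode),
    fun x hx ↦ ⟨m ⟨x, hx⟩, Fin.is_le _, Set.disjoint_left.2 ?_⟩⟩
  · simp only [code, Set.mem_Icc]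
    omega
  · rintro _ ⟨e, ⟨he, hxe⟩, rfl⟩ hmem
    lift e to G.edgeSet using he
    have hne := hcm e
    rw [(hp e ⟨x, hx⟩).1 hxe, Ne, Fin.ext_iff] at hne
    rw [Subtype.val_injective.extend_apply] at hmem
    simp only [code, Set.mem_Icc] at hmem
    omega

theorem exists_isCyclicIntervalColoring_of_isBiregular [Fintype V] [DecidableRel G.Adj] {k : ℕ}
    (hG : IsBiregular G (2 * k) (2 * (k + 1))) :
    ∃ c : Sym2 V → ℕ, IsCyclicIntervalColoring G (2 * (k + 1)) c := by
  obtain ⟨X, -, -, hadj, hX, hY⟩ := hG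
  have hbip : G.IsBipartiteWith X Xᶜ := ⟨disjoint_compl_right, fun v w hvw ↦ by
    have := hadj v w hvw
    by_cases hv : v ∈ X <;> simp_all⟩
  obtain ⟨c, hc, hmissing⟩ := exists_isProperEdgeColoring_missing_pair hbip
    (fun x hx ↦ (hX x hx).le) (fun y hy ↦ (hY y hy).le)
  refine ⟨c, hc, fun v ↦ Or.inr ?_⟩
  by_cases hv : v ∈ X
  · obtain ⟨m, hm, hdisj⟩ := hmissing v hv
    refine ⟨2 * m + 1, 2 * m + 2, hc.sdiff_colorsAt_eq v ?_ hdisj ?_⟩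
    · exact Set.Icc_subset_Icc (by omega) (by omega)
    · rw [hX v hv, Set.ncard_Icc_nat]
      omega
  · refine ⟨1, 0, hc.sdiff_colorsAt_eq v ?_ ?_ ?_⟩
    · simp
    · simp
    · simp [hY v hv]

end SimpleGraph

/-- every finite `(2r-2, 2r)`-biregular graph (`r ≥ 2`) has a cyclic interval
`2r`-coloring, and the least `t` for which it has a cyclic interval `t`-coloring is `2r`. -/
theorem stmt_9 {V : Type*} [Fintype V] (G : SimpleGraph V) [DecidableRel G.Adj]
    (r : ℕ) (hr : 2 ≤ r) (hbireg : IsBiregular G (2 * r - 2) (2 * r)) :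
    (∃ c : Sym2 V → ℕ, IsCyclicIntervalColoring G (2 * r) c) ∧
    IsLeast {t : ℕ | ∃ c : Sym2 V → ℕ, IsCyclicIntervalColoring G t c} (2 * r) := by
  obtain ⟨k, rfl⟩ : ∃ k, r = k + 1 := ⟨r - 1, by omega⟩
  have hexists : ∃ c : Sym2 V → ℕ, IsCyclicIntervalColoring G (2 * (k + 1)) c :=
    exists_isCyclicIntervalColoring_of_isBiregular hbireg
  refine ⟨hexists, hexists, ?_⟩
  rintro t ⟨c, hc, -⟩
  obtain ⟨X, -, ⟨y, hy⟩, -, -, hY⟩ := hbireg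
  exact (hY y hy).ge.trans (hc.degree_le y)
end
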